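/- Assume M = Q and X̄₀^red ∈ ℝ^{Q×Q} is invertible, and let λ₋ ≥ 0 be the smallest eigenvalue of the positive semidefinite symmetric matrix Δ₂^rel. Then ‖(1 + Δ₂^rel)⁻¹‖_op = (1 + λ₋)⁻¹ ≤ 1, Tr( Y·Δ₂^rel·(1 + Δ₂^rel)⁻¹·Yᵀ ) ≤ (1 + λ₋)⁻¹·‖Y·Δ₁^rel‖²_{L²_𝒩}, and consequently ‖Y^ext·𝒫^⊥‖_{L²_𝒩} ≤ ‖Y·(X̄₀^red)⁻¹·ΔX₀‖_{L²_𝒩}. -/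

import Mathlib

/-!
Write `D = Δ₂^rel`, a real positive semidefinite matrix, and `λ` for its least eigenvalue.

Since every eigenvalue of `D` is at least `λ`, the matrix `D - λ` is positive semidefinite
(`posSemidef_sub_smul_of_isLeast`). Hence `(1 + λ)‖w‖² ≤ ⟨w, (1 + D) w⟩ ≤ ‖w‖ ‖(1 + D) w‖`, which
bounds `‖(1 + D)⁻¹‖` by `(1 + λ)⁻¹`; an eigenvector for `λ` shows equality (`opNorm_inv_one_add`).

For the trace bound, with `R = (1 + D)⁻¹`,
`D - (1 + λ) D R = R (D (D - λ) + D (D - λ) D) R` and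
`D (D - λ) = (D - λ)² + λ (D - λ)`, so the difference is positive semidefinite
(`posSemidef_sub_mul_inv`).

The last inequality is the minimality of the weighted least-squares residual: `Y^ext 𝒫^⊥` has the
smallest `L²_𝒩` norm among all `Y^ext - W X₀`, and the choice `W = Y (X̄₀^red)⁻¹` gives
`Y^ext - W X₀ = -W ΔX₀`. It uses that `X₀ 𝒩⁻¹ X₀ᵀ` is invertible, which holds because `X̄₀^red`
is obtained from `X₀` by a right multiplication (averaging), so the rows of `X₀` are independent.
-/

open Matrix

noncomputable section

/-- Index type for training inputs: class `j ∈ {1,…,Q}` and sample `i ∈ {1,…,N_j}`. -/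
abbrev Idx (Q : ℕ) (Nc : Fin Q → ℕ) : Type := (j : Fin Q) × Fin (Nc j)

/-- The matrix `X̄₀^red ∈ ℝ^{M×Q}` of class means `x̄_{0,j} = (1/N_j)·Σ_i x_{0,j,i}`. -/
def classMeans {Q M : ℕ} (Nc : Fin Q → ℕ) (X : Matrix (Fin M) (Idx Q Nc) ℝ) :
    Matrix (Fin M) (Fin Q) ℝ :=
  Matrix.of fun m j => (Nc j : ℝ)⁻¹ * ∑ i : Fin (Nc j), X m ⟨j, i⟩

/-- The matrix `X̄₀ ∈ ℝ^{M×N}` with column `x̄_{0,j}` at each position of class `j`. -/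
def barX {Q M : ℕ} (Nc : Fin Q → ℕ) (X : Matrix (Fin M) (Idx Q Nc) ℝ) :
    Matrix (Fin M) (Idx Q Nc) ℝ :=
  Matrix.of fun m p => classMeans Nc X m p.1

/-- The deviation matrix `ΔX₀ := X₀ − X̄₀`. -/
def deltaX {Q M : ℕ} (Nc : Fin Q → ℕ) (X : Matrix (Fin M) (Idx Q Nc) ℝ) :
    Matrix (Fin M) (Idx Q Nc) ℝ := X - barX Nc X

/-- The block-diagonal weight matrix `𝒩 = diag(N_j·1_{N_j×N_j})`. -/
def calN (Q : ℕ) (Nc : Fin Q → ℕ) : Matrix (Idx Q Nc) (Idx Q Nc) ℝ :=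
  Matrix.diagonal fun p => (Nc p.1 : ℝ)

/-- The extended target matrix `Y^ext ∈ ℝ^{Q×N}`: column `y_j` at each position of class `j`. -/
def Yext {Q : ℕ} (Nc : Fin Q → ℕ) (Y : Matrix (Fin Q) (Fin Q) ℝ) :
    Matrix (Fin Q) (Idx Q Nc) ℝ :=
  Matrix.of fun q p => Y q p.1

/-- Entrywise ReLU on matrices: `σ(A)_{kl} = max(0, A_{kl})`. -/
def relu {m n : Type*} (A : Matrix m n ℝ) : Matrix m n ℝ :=
  Matrix.of fun i j => max 0 (A i j)

/-- Euclidean norm of a vector in `ℝ^k`. -/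
def enorm {k : ℕ} (v : Fin k → ℝ) : ℝ := Real.sqrt (∑ i, (v i) ^ 2)

/-- Frobenius (Hilbert–Schmidt) norm `‖B‖_F = √Tr(BBᵀ)`. -/
def frob {m n : Type*} [Fintype m] [Fintype n] (A : Matrix m n ℝ) : ℝ :=
  Real.sqrt (Matrix.trace (A * Aᵀ))

/-- The replicated-bias matrix `b·u_Nᵀ ∈ ℝ^{M×N}`. -/
def colRep {Q M : ℕ} (Nc : Fin Q → ℕ) (b : Fin M → ℝ) : Matrix (Fin M) (Idx Q Nc) ℝ :=
  Matrix.of fun m _ => b m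

/-- The weighted `L²_𝒩` norm `‖A‖ = √Tr(A𝒩⁻¹Aᵀ)`. -/
def l2N {Q M : ℕ} (Nc : Fin Q → ℕ) (A : Matrix (Fin M) (Idx Q Nc) ℝ) : ℝ :=
  Real.sqrt (Matrix.trace (A * (calN Q Nc)⁻¹ * Aᵀ))

/-- `ℓ²→ℓ²` operator norm of a matrix. -/
def opNorm {m n : ℕ} (A : Matrix (Fin m) (Fin n) ℝ) : ℝ :=
  ‖LinearMap.toContinuousLinearMap (Matrix.toEuclideanLin A)‖

/-- `Δ₁^rel := (X̄₀^red)⁻¹ · ΔX₀`. -/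
def Del1 {Q : ℕ} (Nc : Fin Q → ℕ) (X₀ : Matrix (Fin Q) (Idx Q Nc) ℝ) :
    Matrix (Fin Q) (Idx Q Nc) ℝ :=
  (classMeans Nc X₀)⁻¹ * deltaX Nc X₀

/-- `Δ₂^rel := Δ₁^rel · 𝒩⁻¹ · (Δ₁^rel)ᵀ`. -/
def Del2 {Q : ℕ} (Nc : Fin Q → ℕ) (X₀ : Matrix (Fin Q) (Idx Q Nc) ℝ) :
    Matrix (Fin Q) (Fin Q) ℝ :=
  Del1 Nc X₀ * (calN Q Nc)⁻¹ * (Del1 Nc X₀)ᵀ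

/-- The projector `𝒫 := 𝒩⁻¹X₀ᵀ(X₀𝒩⁻¹X₀ᵀ)⁻¹X₀`. -/
def Pmat {Q M : ℕ} (Nc : Fin Q → ℕ) (X₀ : Matrix (Fin M) (Idx Q Nc) ℝ) :
    Matrix (Idx Q Nc) (Idx Q Nc) ℝ :=
  (calN Q Nc)⁻¹ * X₀ᵀ * (X₀ * (calN Q Nc)⁻¹ * X₀ᵀ)⁻¹ * X₀

lemma posSemidef_sub_smul_of_isLeast {n : ℕ} {D : Matrix (Fin n) (Fin n) ℝ} (hD : D.IsHermitian)
    {lam : ℝ} (hlam : IsLeast (spectrum ℝ D) lam) : (D - lam • 1).PosSemidef := by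
  have hH : (D - lam • (1 : Matrix (Fin n) (Fin n) ℝ)).IsHermitian := by
    refine hD.sub ?_
    simp [Matrix.IsHermitian]
  rw [hH.posSemidef_iff_eigenvalues_nonneg]
  intro i
  have hi : hH.eigenvalues i ∈ spectrum ℝ (D - algebraMap ℝ (Matrix (Fin n) (Fin n) ℝ) lam) := by
    rw [Algebra.algebraMap_eq_smul_one, hH.spectrum_real_eq_range_eigenvalues]
    exact ⟨i, rfl⟩
  rw [← spectrum.sub_singleton_eq] at hi
  obtain ⟨a, ha, b, hb, hab⟩ := hi
  have := hlam.2 ha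
  rw [Set.mem_singleton_iff] at hb
  simp only [Pi.zero_apply]
  simp only at hab
  linarith

lemma exists_eigenvector {n : ℕ} {D : Matrix (Fin n) (Fin n) ℝ} {lam : ℝ}
    (h : lam ∈ spectrum ℝ D) : ∃ v : Fin n → ℝ, v ≠ 0 ∧ D *ᵥ v = lam • v := by
  have hdet : (lam • (1 : Matrix (Fin n) (Fin n) ℝ) - D).det = 0 := by
    by_contra hne
    apply h
    rw [spectrum.mem_resolventSet_iff, Algebra.algebraMap_eq_smul_one,
      Matrix.isUnit_iff_isUnit_det]
    exact isUnit_iff_ne_zero.mpr hne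
  obtain ⟨v, hv, hv0⟩ := Matrix.exists_mulVec_eq_zero_iff.mpr hdet
  refine ⟨v, hv, ?_⟩
  rw [Matrix.sub_mulVec, Matrix.smul_mulVec, Matrix.one_mulVec, sub_eq_zero] at hv0
  exact hv0.symm

lemma opNorm_inv_one_add {n : ℕ} {D : Matrix (Fin n) (Fin n) ℝ} (hD : D.PosSemidef)
    {lam : ℝ} (h0 : 0 ≤ lam) (hlam : IsLeast (spectrum ℝ D) lam)
    (hU : IsUnit (1 + D).det) : opNorm ((1 + D)⁻¹) = (1 + lam)⁻¹ := by
  have hpos : 0 < 1 + lam := by linarith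
  apply le_antisymm
  · refine ContinuousLinearMap.opNorm_le_bound _ (by positivity) fun x => ?_
    set w : EuclideanSpace ℝ (Fin n) :=
      LinearMap.toContinuousLinearMap (Matrix.toEuclideanLin (1 + D)⁻¹) x with hw
    have hx : x = Matrix.toEuclideanLin (1 + D) w := by
      rw [hw]
      simp only [LinearMap.coe_toContinuousLinearMap', Matrix.toLpLin_apply,
        Matrix.mulVec_mulVec, Matrix.mul_nonsing_inv _ hU, Matrix.one_mulVec]
    have hS := (posSemidef_sub_smul_of_isLeast hD.isHermitian hlam).dotProduct_mulVec_nonneg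
      (WithLp.ofLp w)
    have hinner : inner ℝ w x = (1 + lam) * ‖w‖ ^ 2 +
        star (WithLp.ofLp w) ⬝ᵥ (D - lam • 1) *ᵥ (WithLp.ofLp w) := by
      rw [← real_inner_self_eq_norm_sq]
      nth_rw 1 [hx]
      simp only [EuclideanSpace.inner_eq_star_dotProduct, Matrix.toLpLin_apply, star_trivial,
        Matrix.sub_mulVec, Matrix.add_mulVec, Matrix.smul_mulVec, Matrix.one_mulVec,
        dotProduct_sub, dotProduct_smul, smul_eq_mul, add_dotProduct]
      rw [dotProduct_comm (D *ᵥ _)]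
      ring
    have hcs := real_inner_le_norm w x
    rw [inv_mul_eq_div, le_div_iff₀ hpos]
    by_cases hw0 : ‖w‖ = 0
    · rw [hw0]; simp
    · have hwpos : 0 < ‖w‖ := lt_of_le_of_ne (norm_nonneg _) (Ne.symm hw0)
      refine le_of_mul_le_mul_left ?_ hwpos
      nlinarith
  · obtain ⟨v, hv, hDv⟩ := exists_eigenvector hlam.1
    have hRv : (1 + D)⁻¹ *ᵥ v = (1 + lam)⁻¹ • v := by
      have h1 : (1 + D) *ᵥ v = (1 + lam) • v := by
        rw [Matrix.add_mulVec, Matrix.one_mulVec, hDv, add_smul, one_smul]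
      calc (1 + D)⁻¹ *ᵥ v = (1 + lam)⁻¹ • ((1 + D)⁻¹ *ᵥ ((1 + lam) • v)) := by
            rw [Matrix.mulVec_smul, smul_smul, inv_mul_cancel₀ hpos.ne', one_smul]
        _ = (1 + lam)⁻¹ • v := by
            rw [← h1, Matrix.mulVec_mulVec, Matrix.nonsing_inv_mul _ hU, Matrix.one_mulVec]
    have hle := (LinearMap.toContinuousLinearMap (Matrix.toEuclideanLin (1 + D)⁻¹)).le_opNorm
      (WithLp.toLp 2 v)
    have hval : LinearMap.toContinuousLinearMap (Matrix.toEuclideanLin (1 + D)⁻¹)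
        (WithLp.toLp 2 v) = (1 + lam)⁻¹ • WithLp.toLp 2 v := by
      simp [Matrix.toLpLin_apply, hRv]
    rw [hval, norm_smul, Real.norm_of_nonneg (by positivity)] at hle
    have hvpos : 0 < ‖WithLp.toLp 2 v‖ := by
      rw [norm_pos_iff]
      simpa using hv
    exact le_of_mul_le_mul_right hle hvpos

lemma posSemidef_sub_mul_inv {n : ℕ} {D : Matrix (Fin n) (Fin n) ℝ} (hD : D.PosSemidef)
    {lam : ℝ} (h0 : 0 ≤ lam) (hS : (D - lam • 1).PosSemidef) (hU : IsUnit (1 + D).det) :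
    (D - (1 + lam) • (D * (1 + D)⁻¹)).PosSemidef := by
  have hDt : Dᴴ = D := hD.isHermitian
  have hSt : (D - lam • (1 : Matrix (Fin n) (Fin n) ℝ))ᴴ = D - lam • 1 := hS.isHermitian
  have hRt : ((1 + D)⁻¹)ᴴ = (1 + D)⁻¹ := by
    rw [Matrix.conjTranspose_nonsing_inv, Matrix.conjTranspose_add, hDt,
      Matrix.conjTranspose_one]
  have hcore : (D * (D - lam • 1) + D * (D - lam • 1) * D).PosSemidef := by
    refine Matrix.PosSemidef.add ?_ ?_
    · have h1 := Matrix.posSemidef_self_mul_conjTranspose (D - lam • (1 : Matrix (Fin n) (Fin n) ℝ))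
      rw [hSt] at h1
      have h2 := h1.add (hS.smul h0)
      convert h2 using 1
      simp only [mul_sub, sub_mul, smul_sub, smul_mul_assoc, mul_smul_comm, mul_one, one_mul]
      abel
    · have h1 := hS.mul_mul_conjTranspose_same D
      rwa [hDt] at h1
  have hfin := hcore.mul_mul_conjTranspose_same ((1 + D)⁻¹)
  rw [hRt] at hfin
  convert hfin using 1
  have hRl : (1 + D)⁻¹ * (1 + D) = 1 := Matrix.nonsing_inv_mul _ hU
  have hRr : (1 + D) * (1 + D)⁻¹ = 1 := Matrix.mul_nonsing_inv _ hU
  -- Both sides agree after multiplication by the unit `1 + D` on the left and on the right.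
  have key : (1 + D) * (D - (1 + lam) • (D * (1 + D)⁻¹)) * (1 + D) =
      D * (D - lam • 1) + D * (D - lam • 1) * D := by
    have : (1 + D) * (D - (1 + lam) • (D * (1 + D)⁻¹)) * (1 + D) =
        (1 + D) * D * (1 + D) - (1 + lam) • ((1 + D) * D * ((1 + D)⁻¹ * (1 + D))) := by
      simp only [mul_sub, sub_mul, smul_mul_assoc, mul_smul_comm, Matrix.mul_assoc]
    rw [this, hRl]
    simp only [mul_sub, sub_mul, mul_add, add_mul, add_smul, smul_add, smul_mul_assoc,
      mul_smul_comm, mul_one, one_mul, one_smul]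
    abel
  rw [← key]
  calc _ = ((1 + D)⁻¹ * (1 + D)) * (D - (1 + lam) • (D * (1 + D)⁻¹)) *
        ((1 + D) * (1 + D)⁻¹) := by rw [hRl, hRr, one_mul, mul_one]
    _ = _ := by simp only [Matrix.mul_assoc]

/-- A weighted orthogonal projection does not increase the weighted norm: with
`P = W Xᵀ (X W Xᵀ)⁻¹ X` one has `(1 - P) W (1 - P)ᵀ = W - P W`, and `P W` is positive semidefinite. -/
lemma trace_proj_le {m k ι : Type*} [Fintype m] [DecidableEq m] [Fintype k] [Fintype ι]
    [DecidableEq ι] {W : Matrix ι ι ℝ} (hWt : Wᵀ = W) {X : Matrix m ι ℝ}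
    (hS : (X * W * Xᵀ).PosDef) (B : Matrix k ι ℝ) :
    Matrix.trace (B * (1 - W * Xᵀ * (X * W * Xᵀ)⁻¹ * X) * W *
      (B * (1 - W * Xᵀ * (X * W * Xᵀ)⁻¹ * X))ᵀ) ≤ Matrix.trace (B * W * Bᵀ) := by
  set S := X * W * Xᵀ with hSdef
  have hdet : IsUnit S.det := (Matrix.isUnit_iff_isUnit_det _).mp hS.isUnit
  have hSit : (S⁻¹)ᵀ = S⁻¹ := by
    have := hS.inv.isHermitian
    simpa [Matrix.IsHermitian] using this
  have hsub : (1 - W * Xᵀ * S⁻¹ * X) * W * (1 - W * Xᵀ * S⁻¹ * X)ᵀ =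
      W - W * Xᵀ * S⁻¹ * (W * Xᵀ)ᵀ := by
    simp only [Matrix.transpose_sub, Matrix.transpose_mul, Matrix.transpose_transpose,
      Matrix.transpose_one, hWt, hSit]
    have e : W * Xᵀ * S⁻¹ * X * W * (Xᵀ * (S⁻¹ * (X * W))) = W * Xᵀ * S⁻¹ * (X * W) := by
      calc _ = W * Xᵀ * S⁻¹ * (X * W * Xᵀ) * S⁻¹ * (X * W) := by
            simp only [Matrix.mul_assoc]
        _ = _ := by rw [← hSdef, Matrix.mul_assoc (W * Xᵀ), Matrix.nonsing_inv_mul _ hdet,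
              Matrix.mul_one]
    rw [sub_mul, sub_mul, mul_sub, mul_sub, e]
    simp only [Matrix.one_mul, Matrix.mul_one, Matrix.mul_assoc]
    abel
  have hK : (B * (W * Xᵀ) * S⁻¹ * (B * (W * Xᵀ))ᴴ).PosSemidef :=
    hS.inv.posSemidef.mul_mul_conjTranspose_same _
  have htr := hK.trace_nonneg
  have hexp : B * (1 - W * Xᵀ * S⁻¹ * X) * W * (B * (1 - W * Xᵀ * S⁻¹ * X))ᵀ =
      B * W * Bᵀ - B * (W * Xᵀ) * S⁻¹ * (B * (W * Xᵀ))ᴴ := by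
    calc _ = B * ((1 - W * Xᵀ * S⁻¹ * X) * W * (1 - W * Xᵀ * S⁻¹ * X)ᵀ) * Bᵀ := by
          rw [Matrix.transpose_mul]; simp only [Matrix.mul_assoc]
      _ = _ := by
          rw [hsub, Matrix.mul_sub, Matrix.sub_mul, Matrix.conjTranspose_eq_transpose_of_trivial,
            Matrix.transpose_mul B]
          simp only [Matrix.mul_assoc]
  rw [hexp, Matrix.trace_sub]
  linarith

lemma calN_inv {Q : ℕ} {Nc : Fin Q → ℕ} (hNc : ∀ j, 0 < Nc j) :
    (calN Q Nc)⁻¹ = Matrix.diagonal fun p : Idx Q Nc => ((Nc p.1 : ℝ))⁻¹ := by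
  apply Matrix.inv_eq_right_inv
  rw [calN, Matrix.diagonal_mul_diagonal, ← Matrix.diagonal_one]
  congr 1
  funext p
  have := hNc p.1
  exact mul_inv_cancel₀ (by positivity)

lemma calN_inv_posDef {Q : ℕ} {Nc : Fin Q → ℕ} (hNc : ∀ j, 0 < Nc j) :
    ((calN Q Nc)⁻¹).PosDef := by
  rw [calN_inv hNc]
  refine Matrix.PosDef.diagonal fun p => ?_
  have := hNc p.1
  positivity

/-- Class means arise from right multiplication by the averaging matrix, so invertibility of
`X̄₀^red` forces the rows of `X₀` to be linearly independent. -/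
lemma gram_posDef {Q : ℕ} {Nc : Fin Q → ℕ} (hNc : ∀ j, 0 < Nc j)
    {X₀ : Matrix (Fin Q) (Idx Q Nc) ℝ} (hred : IsUnit (classMeans Nc X₀)) :
    (X₀ * (calN Q Nc)⁻¹ * X₀ᵀ).PosDef := by
  have hinj : Function.Injective X₀.vecMul := by
    let E : Matrix (Idx Q Nc) (Fin Q) ℝ :=
      Matrix.of fun p j => if p.1 = j then (Nc j : ℝ)⁻¹ else 0
    have hE : classMeans Nc X₀ = X₀ * E := by
      ext m j
      rw [Matrix.mul_apply, Fintype.sum_sigma, Finset.sum_eq_single j]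
      · simp [classMeans, E, Finset.mul_sum, mul_comm]
      · intro b _ hb
        simp [E, hb]
      · simp
    have hc := Matrix.vecMul_injective_of_isUnit hred
    intro u v huv
    apply hc
    simp only [hE] at huv ⊢
    change u ᵥ* X₀ = v ᵥ* X₀ at huv
    change u ᵥ* (X₀ * E) = v ᵥ* (X₀ * E)
    rw [← Matrix.vecMul_vecMul, ← Matrix.vecMul_vecMul, huv]
  simpa using (calN_inv_posDef hNc).mul_mul_conjTranspose_same hinj

lemma mul_barX {Q : ℕ} (Nc : Fin Q → ℕ) (X₀ : Matrix (Fin Q) (Idx Q Nc) ℝ)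
    (W : Matrix (Fin Q) (Fin Q) ℝ) : W * barX Nc X₀ = Yext Nc (W * classMeans Nc X₀) := by
  ext i p
  simp [barX, Yext, Matrix.mul_apply]

lemma l2N_sq {Q M : ℕ} {Nc : Fin Q → ℕ} (hNc : ∀ j, 0 < Nc j)
    (A : Matrix (Fin M) (Idx Q Nc) ℝ) :
    l2N Nc A ^ 2 = Matrix.trace (A * (calN Q Nc)⁻¹ * Aᵀ) := by
  rw [l2N, Real.sq_sqrt]
  have := ((calN_inv_posDef hNc).posSemidef.mul_mul_conjTranspose_same A).trace_nonneg
  simpa using this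

/-- For `M = Q` with `X̄₀^red` invertible and `λ₋` the smallest eigenvalue of
the positive semidefinite symmetric matrix `Δ₂^rel`:
`λ₋ ≥ 0`, `‖(1 + Δ₂^rel)⁻¹‖_op = (1 + λ₋)⁻¹ ≤ 1`,
`Tr(Y·Δ₂^rel·(1 + Δ₂^rel)⁻¹·Yᵀ) ≤ (1 + λ₋)⁻¹·‖Y·Δ₁^rel‖²_{L²_𝒩}`, and consequently
`‖Y^ext𝒫^⊥‖_{L²_𝒩} ≤ ‖Y·(X̄₀^red)⁻¹·ΔX₀‖_{L²_𝒩}`. -/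
theorem statement13 {Q : ℕ} (Nc : Fin Q → ℕ) (hNc : ∀ j, 0 < Nc j)
    (X₀ : Matrix (Fin Q) (Idx Q Nc) ℝ)
    (hred : IsUnit (classMeans Nc X₀))
    (Y : Matrix (Fin Q) (Fin Q) ℝ)
    (lam : ℝ) (hlam : IsLeast (spectrum ℝ (Del2 Nc X₀)) lam) :
    0 ≤ lam ∧
    opNorm ((1 + Del2 Nc X₀)⁻¹) = (1 + lam)⁻¹ ∧
    (1 + lam)⁻¹ ≤ 1 ∧
    Matrix.trace (Y * Del2 Nc X₀ * (1 + Del2 Nc X₀)⁻¹ * Yᵀ) ≤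
      (1 + lam)⁻¹ * (l2N Nc (Y * Del1 Nc X₀)) ^ 2 ∧
    l2N Nc (Yext Nc Y * (1 - Pmat Nc X₀)) ≤
      l2N Nc (Y * (classMeans Nc X₀)⁻¹ * deltaX Nc X₀) := by
  have hWt : ((calN Q Nc)⁻¹)ᵀ = (calN Q Nc)⁻¹ := by
    rw [calN_inv hNc, Matrix.diagonal_transpose]
  have hD : (Del2 Nc X₀).PosSemidef := by
    simpa [Del2] using
      (calN_inv_posDef hNc).posSemidef.mul_mul_conjTranspose_same (Del1 Nc X₀)
  have h0 : 0 ≤ lam := by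
    have h := hlam.1
    rw [hD.isHermitian.spectrum_real_eq_range_eigenvalues] at h
    obtain ⟨i, rfl⟩ := h
    exact hD.eigenvalues_nonneg i
  have hU : IsUnit (1 + Del2 Nc X₀).det :=
    (Matrix.isUnit_iff_isUnit_det _).mp (Matrix.PosDef.one.add_posSemidef hD).isUnit
  have hpos : 0 < 1 + lam := by linarith
  refine ⟨h0, opNorm_inv_one_add hD h0 hlam hU, inv_le_one_of_one_le₀ (by linarith), ?_, ?_⟩
  · have hT := posSemidef_sub_mul_inv hD h0
      (posSemidef_sub_smul_of_isLeast hD.isHermitian hlam) hU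
    have htr := (hT.mul_mul_conjTranspose_same Y).trace_nonneg
    have e1 : l2N Nc (Y * Del1 Nc X₀) ^ 2 = Matrix.trace (Y * Del2 Nc X₀ * Yᵀ) := by
      rw [l2N_sq hNc, Del2, Matrix.transpose_mul]
      simp only [Matrix.mul_assoc]
    rw [e1, inv_mul_eq_div, le_div_iff₀ hpos]
    rw [Matrix.mul_sub, Matrix.sub_mul, Matrix.trace_sub, Matrix.mul_smul, Matrix.smul_mul,
      Matrix.trace_smul, smul_eq_mul, Matrix.conjTranspose_eq_transpose_of_trivial,
      ← Matrix.mul_assoc Y] at htr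
    linarith
  · have hS := gram_posDef hNc hred
    have hSdet : IsUnit (X₀ * (calN Q Nc)⁻¹ * X₀ᵀ).det :=
      (Matrix.isUnit_iff_isUnit_det _).mp hS.isUnit
    have hC : IsUnit (classMeans Nc X₀).det := (Matrix.isUnit_iff_isUnit_det _).mp hred
    set Z := Y * (classMeans Nc X₀)⁻¹ with hZ
    have hres : Yext Nc Y = Z * X₀ - Z * deltaX Nc X₀ := by
      rw [deltaX, Matrix.mul_sub, mul_barX, hZ, Matrix.mul_assoc Y _ (classMeans Nc X₀),
        Matrix.nonsing_inv_mul _ hC, Matrix.mul_one]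
      abel
    have hXP : X₀ * (1 - Pmat Nc X₀) = 0 := by
      have : X₀ * Pmat Nc X₀ = X₀ * (calN Q Nc)⁻¹ * X₀ᵀ * (X₀ * (calN Q Nc)⁻¹ * X₀ᵀ)⁻¹ * X₀ := by
        simp only [Pmat, Matrix.mul_assoc]
      rw [Matrix.mul_sub, this, Matrix.mul_nonsing_inv _ hSdet, Matrix.mul_one, Matrix.one_mul,
        sub_self]
    have hproj : Yext Nc Y * (1 - Pmat Nc X₀) = -(Z * deltaX Nc X₀ * (1 - Pmat Nc X₀)) := by
      rw [hres, Matrix.sub_mul, Matrix.mul_assoc Z X₀, hXP, Matrix.mul_zero, zero_sub]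
    rw [hproj, l2N, l2N]
    apply Real.sqrt_le_sqrt
    rw [Matrix.transpose_neg, Matrix.neg_mul, Matrix.neg_mul, Matrix.mul_neg, neg_neg]
    exact trace_proj_le hWt hS _
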